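/- Let Λ be a nonempty finite linearly ordered set of even cardinality. Suppose the nonlinear term φ is symmetric, i.e. φ(K) = φ(Λ) − φ(Λ \ K) for every subset K ⊆ Λ, and suppose u₀ + (∑_{j∈Λ} u₁(j))/2 + φ(Λ)/2 = 0. Then the determinant of the projectivity matrix M associated with Φ is zero. (Theorem 1 stated in determinant form, combining the symmetry condition with Lemmas 1–3.) -/

import Mathlib

open Finset Real

/-!
Each row `K ≠ ∅` has exactly two nonzero entries, both `1`, in columns whose cardinalities differ
by one, so it annihilates the vector `v K = (-1) ^ #K`. The row `∅` sends `v` to the alternating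
sum `∑ K, Φ K * (-1) ^ #K`. Under the symmetry condition `Φ K` and `Φ Kᶜ` are values of the logistic
function at opposite points, hence sum to `1`; as `#K` and `#Kᶜ` have the same parity, grouping the
subsets into complementary pairs turns the alternating sum into `∑ K, (-1) ^ #K` over the subsets of
a nonempty set, which vanishes. So `v` is a nonzero vector in the kernel.
-/

lemma exp_div_one_add_exp_eq_sigmoid (x : ℝ) : exp x / (1 + exp x) = sigmoid x := by
  rw [sigmoid_def, exp_neg]
  field_simp
  ring

lemma add_compl_eq_one_of_symmetric {ι : Type*} [Fintype ι] [DecidableEq ι]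
    {u₀ : ℝ} {u₁ : ι → ℝ} {φ Φ : Finset ι → ℝ}
    (hΦ : ∀ K, Φ K = exp (u₀ + ∑ j ∈ K, u₁ j + φ K) / (1 + exp (u₀ + ∑ j ∈ K, u₁ j + φ K)))
    (hsym : ∀ K, φ K = φ univ - φ Kᶜ) (hpot : u₀ + (∑ j, u₁ j) / 2 + φ univ / 2 = 0)
    (K : Finset ι) : Φ K + Φ Kᶜ = 1 := by
  have hneg : u₀ + ∑ j ∈ Kᶜ, u₁ j + φ Kᶜ = -(u₀ + ∑ j ∈ K, u₁ j + φ K) := by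
    linear_combination 2 * hpot + sum_add_sum_compl K u₁ + hsym K
  rw [hΦ K, hΦ Kᶜ, hneg, exp_div_one_add_exp_eq_sigmoid, exp_div_one_add_exp_eq_sigmoid,
    sigmoid_neg, add_sub_cancel]

section AlternatingSum

lemma sum_powerset_neg_one_pow_card_eq_zero {ι R : Type*} [Ring R] {s : Finset ι}
    (hs : s.Nonempty) : ∑ K ∈ s.powerset, (-1 : R) ^ #K = 0 := by
  exact_mod_cast congrArg (Int.cast : ℤ → R) (sum_powerset_neg_one_pow_card_of_nonempty hs)

variable {ι : Type*} [Fintype ι] [DecidableEq ι]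

lemma sum_eq_sum_powerset_compl_singleton_add_compl {A : Type*} [AddCommMonoid A]
    (i : ι) (g : Finset ι → A) :
    ∑ K, g K = ∑ K ∈ ({i}ᶜ : Finset ι).powerset, (g K + g Kᶜ) := by
  have hfilter : ({K | i ∉ K} : Finset (Finset ι)) = ({i}ᶜ : Finset ι).powerset := by
    ext K
    simp
  have hcompl : ∑ K with i ∉ K, g Kᶜ = ∑ K with i ∈ K, g K :=
    sum_nbij' compl compl (by simp) (by simp) (by simp) (by simp) (by simp)
  rw [← hfilter, sum_add_distrib, hcompl, add_comm, sum_filter_add_sum_filter_not]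

lemma neg_one_pow_card_compl {M : Type*} [Monoid M] [HasDistribNeg M]
    (heven : Even (Fintype.card ι)) (K : Finset ι) :
    (-1 : M) ^ #Kᶜ = (-1) ^ #K :=
  neg_one_pow_congr <| Nat.even_add.mp <| by rwa [card_compl_add_card]

lemma sum_mul_neg_one_pow_card_eq_zero_of_add_compl [Nonempty ι] {R : Type*} [Ring R]
    (heven : Even (Fintype.card ι)) {f : Finset ι → R} {c : R} (hf : ∀ K, f K + f Kᶜ = c) :
    ∑ K, f K * (-1) ^ #K = 0 := by
  obtain ⟨i⟩ := ‹Nonempty ι›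
  have hne : ({i}ᶜ : Finset ι).Nonempty := by
    rw [← card_pos, card_compl, card_singleton, Nat.sub_pos_iff_lt]
    exact Nat.one_lt_of_ne_zero_of_even (Fintype.card_pos_iff.mpr ⟨i⟩).ne' heven
  simp_rw [sum_eq_sum_powerset_compl_singleton_add_compl i, neg_one_pow_card_compl heven,
    ← add_mul, hf, ← mul_sum, sum_powerset_neg_one_pow_card_eq_zero hne, mul_zero]

end AlternatingSum

section ProjectivityMatrix

variable {ι R : Type*} [DecidableEq ι]

/-- The projectivity matrix of `Φ`, with the element deleted from a nonempty set `K` given by an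
arbitrary choice function `r`; taking `r := Finset.min'` gives the matrix of the paper. -/
def projectivityMatrix [Zero R] [One R] (r : ∀ K : Finset ι, K.Nonempty → ι) (Φ : Finset ι → R) :
    Matrix (Finset ι) (Finset ι) R :=
  Matrix.of fun K K' =>
    if hK : K.Nonempty then if K' = K ∨ K' = K.erase (r K hK) then 1 else 0 else Φ K'

open Matrix in
lemma projectivityMatrix_mulVec_neg_one_pow_card [Fintype ι] [Ring R]
    {r : ∀ K : Finset ι, K.Nonempty → ι} (hr : ∀ K hK, r K hK ∈ K) (Φ : Finset ι → R) :
    projectivityMatrix r Φ *ᵥ (fun K => (-1) ^ #K) = Pi.single ∅ (∑ K, Φ K * (-1) ^ #K) := by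
  ext K
  obtain rfl | hK := K.eq_empty_or_nonempty
  · simp [projectivityMatrix, mulVec, dotProduct]
  · have hpair : ({K' | K' = K ∨ K' = K.erase (r K hK)} : Finset (Finset ι)) =
        {K, K.erase (r K hK)} := by
      ext
      simp
    have hne : K ≠ K.erase (r K hK) := (erase_ne_self.mpr (hr K hK)).symm
    calc (projectivityMatrix r Φ *ᵥ fun K => (-1) ^ #K) K
        = (-1) ^ #K + (-1) ^ #(K.erase (r K hK)) := by
          simp only [projectivityMatrix, mulVec, dotProduct, of_apply, hK, dite_true, ite_mul,
            one_mul, zero_mul]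
          rw [← sum_filter, hpair, sum_pair hne]
      _ = 0 := by
          rw [← card_erase_add_one (hr K hK), pow_succ]
          simp
      _ = _ := by rw [Pi.single_eq_of_ne hK.ne_empty]

end ProjectivityMatrix

theorem det_projectivity_matrix_eq_zero_of_symmetric_general
    {ι R : Type*} [Fintype ι] [DecidableEq ι] [Nonempty ι] [CommRing R]
    (heven : Even (Fintype.card ι)) {Φ : Finset ι → R} {c : R} (hΦ : ∀ K, Φ K + Φ Kᶜ = c)
    {r : ∀ K : Finset ι, K.Nonempty → ι} (hr : ∀ K hK, r K hK ∈ K) :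
    (projectivityMatrix r Φ).det = 0 := by
  refine Matrix.det_eq_zero_of_mulVec_eq_zero_of_mem_nonZeroDivisors
    (v := fun K => (-1) ^ #K) (i := ∅) ?_ ?_
  · rw [projectivityMatrix_mulVec_neg_one_pow_card hr,
      sum_mul_neg_one_pow_card_eq_zero_of_add_compl heven hΦ, Pi.single_zero]
  · simp

/-- Theorem 1, determinant form: if the nonlinear term `φ` is symmetric and
`u₀ + (∑_{j∈Λ} u₁ j)/2 + φ Λ / 2 = 0`, then the determinant of the projectivity matrix `M`
vanishes. The nonempty finite linearly ordered set `Λ`, of even cardinality, is formalised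
as the finite linearly ordered nonempty type `ι` with `Even (Fintype.card ι)`, and its
subsets as `Finset ι` (so `Λ` is `univ` and `Λ \ K` is `Kᶜ`). -/
theorem det_projectivity_matrix_eq_zero_of_symmetric
    {ι : Type*} [Fintype ι] [LinearOrder ι] [Nonempty ι]
    (heven : Even (Fintype.card ι))
    (u₀ : ℝ) (u₁ : ι → ℝ) (φ : Finset ι → ℝ) (Φ : Finset ι → ℝ)
    (hΦ : ∀ K : Finset ι, Φ K =
      Real.exp (u₀ + ∑ j ∈ K, u₁ j + φ K) /
        (1 + Real.exp (u₀ + ∑ j ∈ K, u₁ j + φ K)))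
    (hsym : ∀ K : Finset ι, φ K = φ Finset.univ - φ Kᶜ)
    (hpot : u₀ + (∑ j, u₁ j) / 2 + φ Finset.univ / 2 = 0)
    (M : Matrix (Finset ι) (Finset ι) ℝ)
    (hM : ∀ K K' : Finset ι,
      M K K' = if hK : K.Nonempty
        then (if K' = K ∨ K' = K.erase (K.min' hK) then 1 else 0)
        else Φ K') :
    M.det = 0 := by
  have hM_eq : M = projectivityMatrix min' Φ := Matrix.ext hM
  exact hM_eq ▸ det_projectivity_matrix_eq_zero_of_symmetric_general heven
    (add_compl_eq_one_of_symmetric hΦ hsym hpot) min'_mem
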